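/- arXiv:1907.03662 — 5 statements merged into one kernel-verified Lean document; each statement's English description precedes it below -/
import Mathlib

section
/- Let 𝔤 be a finite-dimensional real Lie algebra with an inner product ⟨·,·⟩ and Levi-Civita product ∇^𝔤, and let T be a skew-symmetric endomorphism of 𝔤 (⟨Tx,y⟩ = −⟨x,Ty⟩ for all x,y) satisfying the Killing–Yano equation on 𝔤. If 𝔲 ⊆ 𝔤 is a Lie subalgebra with T(𝔲) ⊆ 𝔲, and ∇^𝔲 denotes the Levi-Civita product of 𝔲 with the restricted inner product, then the restriction T|_𝔲 satisfies the Killing–Yano equation on 𝔲: ∇^𝔲_x(Ty) − T(∇^𝔲_x y) + ∇^𝔲_y(Tx) − T(∇^𝔲_y x) = 0 for all x,y ∈ 𝔲. -/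
/-- `x` belongs to the center of the Lie algebra `V`. -/
def IsCentral {V : Type*} [LieRing V] (x : V) : Prop := ∀ y : V, ⁅x, y⁆ = 0

/-- Membership in `𝔳 = 𝔷^⊥`, the orthogonal complement of the center with respect to the
inner product `B`. -/
def InVperp {V : Type*} [LieRing V] [LieAlgebra ℝ V]
    (B : V →ₗ[ℝ] V →ₗ[ℝ] ℝ) (x : V) : Prop :=
  ∀ z : V, IsCentral z → B x z = 0

/-- The Lie algebra `V` is 2-step nilpotent: non-abelian and `⁅⁅V,V⁆,V⁆ = 0`. -/
def TwoStepNilpotent (V : Type*) [LieRing V] : Prop :=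
  (∃ x y : V, ⁅x, y⁆ ≠ 0) ∧ ∀ x y z : V, ⁅⁅x, y⁆, z⁆ = 0

/-- A Killing–Yano tensor on `(V, B)`: a skew-symmetric endomorphism preserving the center
and satisfying `T⁅x,y⁆ = 3⁅Tx,y⁆` for `x, y ∈ 𝔳 = 𝔷^⊥`. -/
def IsKY {V : Type*} [LieRing V] [LieAlgebra ℝ V]
    (B : V →ₗ[ℝ] V →ₗ[ℝ] ℝ) (T : V →ₗ[ℝ] V) : Prop :=
  (∀ x y : V, B (T x) y = - B x (T y)) ∧
  (∀ z : V, IsCentral z → IsCentral (T z)) ∧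
  (∀ x y : V, InVperp B x → InVperp B y → T ⁅x, y⁆ = (3 : ℝ) • ⁅T x, y⁆)

/-- The Koszul formula characterizing the Levi-Civita product of `(V, B)`. -/
def IsLeviCivita {V : Type*} [LieRing V] [LieAlgebra ℝ V]
    (B : V →ₗ[ℝ] V →ₗ[ℝ] ℝ) (nab : V → V → V) : Prop :=
  ∀ x y z : V, 2 * B (nab x y) z = B ⁅x, y⁆ z - B ⁅y, z⁆ x + B ⁅z, x⁆ y

/-!
Pairing the Killing–Yano equation with a vector `z` and moving `T` across the skew-symmetric
pairing leaves only inner products of the form `⟨∇_a b, c⟩` with `a, b, c` among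
`x, y, z, Tx, Ty, Tz`. By the Koszul formula these depend only on brackets and inner products, so
an isometric Lie algebra map intertwining the endomorphisms preserves them. The equation on the
target therefore makes the left-hand side on the source orthogonal to everything.
-/

/-- The Koszul formula for a product `nab` on a Lie algebra over a commutative ring, relative to a
bilinear form `B`. It characterizes the Levi-Civita product of a pseudo-Riemannian metric, and is
`IsLeviCivita` when `R = ℝ`. -/
def IsKoszulProduct {R V : Type*} [CommRing R] [LieRing V] [LieAlgebra R V]
    (B : V →ₗ[R] V →ₗ[R] R) (nab : V → V → V) : Prop :=
  ∀ x y z : V, 2 * B (nab x y) z = B ⁅x, y⁆ z - B ⁅y, z⁆ x + B ⁅z, x⁆ y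

/-- The left-hand side `(∇_x T) y + (∇_y T) x` of the Killing–Yano equation, with the covariant
derivative expanded as `(∇_x T) y = ∇_x (T y) - T (∇_x y)`. -/
def killingYanoDefect {V : Type*} [AddCommGroup V] (nab : V → V → V) (T : V → V) (x y : V) : V :=
  nab x (T y) - T (nab x y) + nab y (T x) - T (nab y x)

/-- The Killing–Yano equation for a map `T` with respect to a product `nab`. -/
def SatisfiesKillingYano {V : Type*} [AddCommGroup V] (nab : V → V → V) (T : V → V) : Prop :=
  ∀ x y : V, killingYanoDefect nab T x y = 0

section BilinearForms

variable {R V U : Type*} [CommRing R] [AddCommGroup V] [Module R V] [AddCommGroup U] [Module R U]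
  {B : V →ₗ[R] V →ₗ[R] R} {C : U →ₗ[R] U →ₗ[R] R}

theorem apply_killingYanoDefect {T : V → V} (hT : B.IsSkewAdjoint T) (nab : V → V → V)
    (x y z : V) :
    B (killingYanoDefect nab T x y) z =
      B (nab x (T y)) z + B (nab x y) (T z) + B (nab y (T x)) z + B (nab y x) (T z) := by
  have skew (v : V) : B (T v) z = -B v (T z) := (hT v z).trans (map_neg (B v) (T z))
  simp only [killingYanoDefect, map_add, map_sub, LinearMap.add_apply, LinearMap.sub_apply, skew,
    sub_neg_eq_add]

theorem isSkewAdjoint_of_semiconj {φ : U → V} (hφ : ∀ u v, B (φ u) (φ v) = C u v)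
    {T : V → V} {S : U → U} (hT : B.IsSkewAdjoint T) (hST : Function.Semiconj φ S T) :
    C.IsSkewAdjoint S := fun u v => by
  calc C (S u) v = B (T (φ u)) (φ v) := by rw [← hφ, hST u]
    _ = -B (φ u) (T (φ v)) := (hT _ _).trans (map_neg _ _)
    _ = C u (-S v) := by rw [← hST v, hφ, map_neg]

theorem separatingLeft_compl₁₂_self (hB : ∀ x, x ≠ 0 → B x x ≠ 0) {f : U →ₗ[R] V}
    (hf : Function.Injective f) : (B.compl₁₂ f f).SeparatingLeft :=
  fun u hu => (map_eq_zero_iff f hf).mp (of_not_not fun hne => hB (f u) hne (hu u))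

end BilinearForms

section IsometricHom

variable {R V U : Type*} [CommRing R] [LieRing V] [LieAlgebra R V] [LieRing U] [LieAlgebra R U]
  {B : V →ₗ[R] V →ₗ[R] R} {C : U →ₗ[R] U →ₗ[R] R} {φ : U →ₗ⁅R⁆ V}
  {nab : V → V → V} {nabU : U → U → U} {T : V → V} {S : U → U}

-- For an inclusion, this says that `∇^𝔲_a b` is the orthogonal projection of `∇^𝔤_a b` to `𝔲`.
theorem IsKoszulProduct.apply_eq_apply_map (h2 : IsLeftRegular (2 : R))
    (hnab : IsKoszulProduct B nab) (hnabU : IsKoszulProduct C nabU)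
    (hφ : ∀ u v, B (φ u) (φ v) = C u v) (a b c : U) :
    C (nabU a b) c = B (nab (φ a) (φ b)) (φ c) := by
  refine h2 ?_
  calc 2 * C (nabU a b) c = C ⁅a, b⁆ c - C ⁅b, c⁆ a + C ⁅c, a⁆ b := hnabU a b c
    _ = B ⁅φ a, φ b⁆ (φ c) - B ⁅φ b, φ c⁆ (φ a) + B ⁅φ c, φ a⁆ (φ b) := by
      simp only [← hφ, LieHom.map_lie]
    _ = 2 * B (nab (φ a) (φ b)) (φ c) := (hnab _ _ _).symm

theorem IsKoszulProduct.apply_killingYanoDefect_eq_apply_map (h2 : IsLeftRegular (2 : R))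
    (hnab : IsKoszulProduct B nab) (hnabU : IsKoszulProduct C nabU)
    (hφ : ∀ u v, B (φ u) (φ v) = C u v)
    (hT : B.IsSkewAdjoint T) (hST : Function.Semiconj φ S T) (x y z : U) :
    C (killingYanoDefect nabU S x y) z = B (killingYanoDefect nab T (φ x) (φ y)) (φ z) := by
  have hS : C.IsSkewAdjoint S := isSkewAdjoint_of_semiconj hφ hT hST
  simp only [apply_killingYanoDefect hS, apply_killingYanoDefect hT,
    hnab.apply_eq_apply_map h2 hnabU hφ, hST.eq]

theorem statement_1_general (h2 : IsLeftRegular (2 : R))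
    (hnab : IsKoszulProduct B nab) (hnabU : IsKoszulProduct C nabU)
    (hφ : ∀ u v, B (φ u) (φ v) = C u v) (hC : C.SeparatingLeft)
    (hT : B.IsSkewAdjoint T) (hST : Function.Semiconj φ S T)
    (hKY : SatisfiesKillingYano nab T) : SatisfiesKillingYano nabU S := by
  refine fun x y => hC _ fun z => ?_
  rw [hnab.apply_killingYanoDefect_eq_apply_map h2 hnabU hφ hT hST, hKY, map_zero,
    LinearMap.zero_apply]

end IsometricHom

/-- the restriction of a Killing-Yano tensor to a T-invariant Lie
subalgebra satisfies the Killing-Yano equation of the subalgebra. -/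
theorem statement_1 (V : Type*) [LieRing V] [LieAlgebra ℝ V] [FiniteDimensional ℝ V]
    (B : V →ₗ[ℝ] V →ₗ[ℝ] ℝ)
    (hsymm : ∀ x y : V, B x y = B y x) (hpos : ∀ x : V, x ≠ 0 → 0 < B x x)
    (nab : V → V → V) (hLC : IsLeviCivita B nab)
    (T : V →ₗ[ℝ] V) (hskew : ∀ x y : V, B (T x) y = - B x (T y))
    (hKYeq : ∀ x y : V, nab x (T y) - T (nab x y) + nab y (T x) - T (nab y x) = 0)
    (U : LieSubalgebra ℝ V) (hTU : ∀ x ∈ U, T x ∈ U)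
    (nabU : U → U → U)
    (hLCU : ∀ x y z : U, 2 * B (nabU x y : V) (z : V) =
        B ⁅(x : V), (y : V)⁆ (z : V) - B ⁅(y : V), (z : V)⁆ (x : V)
          + B ⁅(z : V), (x : V)⁆ (y : V))
    (TU : U → U) (hTUdef : ∀ u : U, (TU u : V) = T u) :
    ∀ x y : U, nabU x (TU y) - TU (nabU x y) + nabU y (TU x) - TU (nabU y x) = 0 := by
  have hT : B.IsSkewAdjoint T := fun x y => (hskew x y).trans (map_neg (B x) (T y)).symm
  have hC : (B.compl₁₂ (U.incl : U →ₗ[ℝ] V) (U.incl : U →ₗ[ℝ] V)).SeparatingLeft :=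
    separatingLeft_compl₁₂_self (fun x hx => (hpos x hx).ne') Subtype.val_injective
  exact statement_1_general (φ := U.incl) (mul_right_injective₀ two_ne_zero) hLC
    (C := B.compl₁₂ (U.incl : U →ₗ[ℝ] V) U.incl) hLCU (fun _ _ => rfl) hC hT hTUdef hKYeq
end

section
/- Let 𝔫 be a 2-step nilpotent finite-dimensional real Lie algebra with inner product ⟨·,·⟩, with center 𝔷 and 𝔳 = 𝔷^⊥. Then there is no Killing–Yano tensor J on (𝔫,⟨·,·⟩) satisfying J² = −Id. In particular, there are no nearly Kähler structures on 2-step nilpotent Lie algebras. -/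
/-!
Skew-symmetry and invariance of the center make `T` preserve `𝔳 = 𝔷^⊥`, so the identity
`T⁅x, y⁆ = 3⁅Tx, y⁆` can be applied twice: `T²⁅x, y⁆ = 9⁅T²x, y⁆` on `𝔳`. If `T² = c • Id` this
reads `c⁅x, y⁆ = 9c⁅x, y⁆`, so for `c ≠ 0` all brackets on `𝔳` vanish. Since `V = 𝔷 + 𝔳` as soon
as `B` has no left kernel on `𝔷`, the Lie algebra `V` is abelian.
-/

theorem separatingLeft_domRestrict₁₂_of_anisotropic {R M : Type*} [CommSemiring R]
    [AddCommMonoid M] [Module R M] {B : M →ₗ[R] M →ₗ[R] R} (hB : ∀ x, B x x = 0 → x = 0)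
    (W : Submodule R M) : (B.domRestrict₁₂ W W).SeparatingLeft :=
  fun w hw => Subtype.ext (hB w (hw w))

theorem exists_mem_forall_apply_sub_eq_zero {K V : Type*} [Field K] [AddCommGroup V]
    [Module K V] {B : V →ₗ[K] V →ₗ[K] K} {W : Submodule K V} [FiniteDimensional K W]
    (hW : (B.domRestrict₁₂ W W).SeparatingLeft) (x : V) :
    ∃ w ∈ W, ∀ z ∈ W, B (x - w) z = 0 := by
  have hinj : Function.Injective (B.domRestrict₁₂ W W) :=
    LinearMap.ker_eq_bot.1 (LinearMap.separatingLeft_iff_ker_eq_bot.1 hW)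
  have hsurj : Function.Surjective (B.domRestrict₁₂ W W) :=
    (LinearMap.injective_iff_surjective_of_finrank_eq_finrank
      Subspace.dual_finrank_eq.symm).1 hinj
  obtain ⟨w, hw⟩ := hsurj ((B x).domRestrict W)
  refine ⟨w, w.2, fun z hz => ?_⟩
  have hwz : B w z = B x z := LinearMap.congr_fun hw ⟨z, hz⟩
  rw [map_sub, LinearMap.sub_apply, hwz, sub_self]

theorem TwoStepNilpotent.not_isLieAbelian {V : Type*} [LieRing V] (hV : TwoStepNilpotent V) :
    ¬ IsLieAbelian V := by
  obtain ⟨⟨x, y, hxy⟩, -⟩ := hV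
  exact fun _ => hxy (trivial_lie_zero V V x y)

theorem IsCentral.lie_sub_sub {V : Type*} [LieRing V] {z w : V} (hz : IsCentral z)
    (hw : IsCentral w) (x y : V) : ⁅x - z, y - w⁆ = ⁅x, y⁆ := by
  have hxw : ⁅x, w⁆ = 0 := by rw [← lie_skew, hw, neg_zero]
  rw [sub_lie, hz, sub_zero, lie_sub, hxw, sub_zero]

theorem isCentral_iff_mem_center {R V : Type*} [CommRing R] [LieRing V] [LieAlgebra R V]
    {x : V} : IsCentral x ↔ x ∈ LieAlgebra.center R V := by
  rw [LieModule.mem_maxTrivSubmodule]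
  refine forall_congr' fun y => ?_
  rw [← lie_skew, neg_eq_zero]

section MetricLieAlgebra

variable {V : Type*} [LieRing V] [LieAlgebra ℝ V] {B : V →ₗ[ℝ] V →ₗ[ℝ] ℝ}

theorem exists_isCentral_inVperp_sub [FiniteDimensional ℝ (LieAlgebra.center ℝ V)]
    (hB : (B.domRestrict₁₂ (LieAlgebra.center ℝ V).toSubmodule
      (LieAlgebra.center ℝ V).toSubmodule).SeparatingLeft) (x : V) :
    ∃ z, IsCentral z ∧ InVperp B (x - z) := by
  obtain ⟨z, hz, hxz⟩ := exists_mem_forall_apply_sub_eq_zero hB x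
  exact ⟨z, isCentral_iff_mem_center.2 hz, fun w hw => hxz w (isCentral_iff_mem_center.1 hw)⟩

theorem isLieAbelian_of_forall_inVperp_lie_eq_zero [FiniteDimensional ℝ (LieAlgebra.center ℝ V)]
    (hB : (B.domRestrict₁₂ (LieAlgebra.center ℝ V).toSubmodule
      (LieAlgebra.center ℝ V).toSubmodule).SeparatingLeft)
    (h : ∀ x y : V, InVperp B x → InVperp B y → ⁅x, y⁆ = 0) : IsLieAbelian V := by
  refine ⟨fun x y => ?_⟩
  obtain ⟨z, hz, hxz⟩ := exists_isCentral_inVperp_sub hB x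
  obtain ⟨w, hw, hyw⟩ := exists_isCentral_inVperp_sub hB y
  rw [← hz.lie_sub_sub hw x y, h _ _ hxz hyw]

namespace IsKY

variable {T : V →ₗ[ℝ] V} {x y : V}

theorem inVperp_apply (hT : IsKY B T) (hx : InVperp B x) : InVperp B (T x) := by
  obtain ⟨hskew, hcentral, -⟩ := hT
  intro z hz
  rw [hskew, hx _ (hcentral z hz), neg_zero]

theorem apply_apply_lie (hT : IsKY B T) (hx : InVperp B x) (hy : InVperp B y) :
    T (T ⁅x, y⁆) = (9 : ℝ) • ⁅T (T x), y⁆ := by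
  have hlie := hT.2.2
  calc T (T ⁅x, y⁆) = (3 : ℝ) • T ⁅T x, y⁆ := by rw [hlie x y hx hy, map_smul]
    _ = (3 : ℝ) • (3 : ℝ) • ⁅T (T x), y⁆ := by rw [hlie _ y (hT.inVperp_apply hx) hy]
    _ = (9 : ℝ) • ⁅T (T x), y⁆ := by rw [smul_smul]; norm_num

theorem lie_eq_zero_of_apply_apply_eq_smul (hT : IsKY B T) {c : ℝ} (hc : c ≠ 0)
    (hTc : ∀ x, T (T x) = c • x) (hx : InVperp B x) (hy : InVperp B y) : ⁅x, y⁆ = 0 := by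
  have hlie : c • ⁅x, y⁆ = (9 : ℝ) • c • ⁅x, y⁆ := calc
    c • ⁅x, y⁆ = T (T ⁅x, y⁆) := (hTc _).symm
    _ = (9 : ℝ) • ⁅T (T x), y⁆ := hT.apply_apply_lie hx hy
    _ = (9 : ℝ) • c • ⁅x, y⁆ := by rw [hTc, smul_lie]
  have hsmul : (8 * c) • ⁅x, y⁆ = 0 := by
    linear_combination (norm := module) -hlie
  exact (smul_eq_zero.1 hsmul).resolve_left (mul_ne_zero (by norm_num) hc)

end IsKY

theorem statement_3_general [FiniteDimensional ℝ (LieAlgebra.center ℝ V)]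
    (hB : (B.domRestrict₁₂ (LieAlgebra.center ℝ V).toSubmodule
      (LieAlgebra.center ℝ V).toSubmodule).SeparatingLeft)
    (hV : ¬ IsLieAbelian V) {c : ℝ} (hc : c ≠ 0) :
    ¬ ∃ T : V →ₗ[ℝ] V, IsKY B T ∧ ∀ x : V, T (T x) = c • x := by
  rintro ⟨T, hT, hTc⟩
  exact hV (isLieAbelian_of_forall_inVperp_lie_eq_zero hB fun _ _ =>
    hT.lie_eq_zero_of_apply_apply_eq_smul hc hTc)

end MetricLieAlgebra

/-- there is no Killing-Yano tensor J with J² = -Id on a 2-step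
nilpotent metric Lie algebra (no nearly Kähler structures). -/
theorem statement_3 (V : Type*) [LieRing V] [LieAlgebra ℝ V] [FiniteDimensional ℝ V]
    (B : V →ₗ[ℝ] V →ₗ[ℝ] ℝ)
    (hsymm : ∀ x y : V, B x y = B y x) (hpos : ∀ x : V, x ≠ 0 → 0 < B x x)
    (h2 : TwoStepNilpotent V) :
    ¬ ∃ J : V →ₗ[ℝ] V, IsKY B J ∧ ∀ x : V, J (J x) = -x := by
  have haniso : ∀ x, B x x = 0 → x = 0 := fun x hx => by_contra fun hne => (hpos x hne).ne' hx
  simpa only [neg_one_smul] using statement_3_general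
    (separatingLeft_domRestrict₁₂_of_anisotropic haniso _) h2.not_isLieAbelian
    (neg_ne_zero.2 one_ne_zero)
end

section
/- Let 𝔫 be a 2-step nilpotent finite-dimensional real Lie algebra with inner product ⟨·,·⟩ and let T be a Killing–Yano tensor on (𝔫,⟨·,·⟩). Then T is parallel with respect to the Levi-Civita product of (𝔫,⟨·,·⟩) if and only if range T is an abelian subalgebra of 𝔫 (i.e. ⁅Tx, Ty⁆ = 0 for all x,y ∈ 𝔫). -/
/-!
Write `𝔫` for the Lie algebra. The Killing–Yano identity extends from `𝔷^⊥` to all of `𝔫`, since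
`T` preserves the center. An endomorphism with `T⁅x, y⁆ = c⁅Tx, y⁆`, `c ≠ 0`, satisfies
`⁅x, Ty⁆ = ⁅Tx, y⁆`; applying `T` to the Jacobi identity and comparing with the Jacobi identity of
`Tx, y, z` gives `(c - 1)⁅x, ⁅Ty, z⁆⁆ = 0`. So for `c = 3` all brackets `⁅Tx, y⁆` are central.

By the Koszul formula, `⟨(∇_x T)y, w⟩` is a combination of `⟨⁅Tx, y⁆, w⟩`, `⟨⁅Tw, x⁆, y⟩` and
`⟨⁅Ty, w⁆, x⟩`. For the central vector `w = ⁅Tx, y⁆` only the first term survives, hence `T` is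
parallel iff `⁅Tx, y⁆ = 0` for all `x, y`. Since `T²⁅x, y⁆ = 9⁅Tx, Ty⁆` and `ker T² = ker T` by
skew-symmetry, this happens iff `⁅Tx, Ty⁆ = 0` for all `x, y`.
-/

/-- `T` lies in the centroid of the Lie algebra `L` up to the factor `c`: `c = 1` is membership in
the centroid, and `c = 3` is the identity satisfied by Killing–Yano tensors. -/
def IsTwistedCentroid {K L : Type*} [CommRing K] [LieRing L] [LieAlgebra K L]
    (c : K) (T : L →ₗ[K] L) : Prop :=
  ∀ x y : L, T ⁅x, y⁆ = c • ⁅T x, y⁆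

namespace IsTwistedCentroid

variable {K L : Type*} [Field K] [LieRing L] [LieAlgebra K L] {c : K} {T : L →ₗ[K] L}

theorem lie_apply (hT : IsTwistedCentroid c T) (hc : c ≠ 0) (x y : L) : ⁅x, T y⁆ = ⁅T x, y⁆ := by
  have h : c • ⁅x, T y⁆ = c • ⁅T x, y⁆ := by
    rw [← hT x y, ← lie_skew x y, map_neg, hT y x, ← smul_neg, lie_skew]
  exact smul_right_injective L hc h

theorem lie_apply_lie (hT : IsTwistedCentroid c T) (hc : c ≠ 0) (x y z : L) :
    ⁅T x, ⁅y, z⁆⁆ = c • ⁅x, ⁅T y, z⁆⁆ := by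
  rw [← hT.lie_apply hc, hT y z, lie_smul]

theorem leibniz_apply (hT : IsTwistedCentroid c T) (hc : c ≠ 0) (x y z : L) :
    ⁅x, ⁅T y, z⁆⁆ = ⁅⁅T x, y⁆, z⁆ + ⁅y, ⁅T x, z⁆⁆ := by
  have h : (c * c) • ⁅x, ⁅T y, z⁆⁆ = (c * c) • (⁅⁅T x, y⁆, z⁆ + ⁅y, ⁅T x, z⁆⁆) :=
    calc (c * c) • ⁅x, ⁅T y, z⁆⁆ = T ⁅x, ⁅y, z⁆⁆ := by
          rw [hT, hT.lie_apply_lie hc, smul_smul]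
      _ = T ⁅⁅x, y⁆, z⁆ + T ⁅y, ⁅x, z⁆⁆ := by rw [leibniz_lie, map_add]
      _ = (c * c) • (⁅⁅T x, y⁆, z⁆ + ⁅y, ⁅T x, z⁆⁆) := by
          rw [hT, hT x y, smul_lie, hT y, hT.lie_apply_lie hc, smul_smul, smul_smul, smul_add]
  exact smul_right_injective L (mul_ne_zero hc hc) h

theorem isCentral_lie (hT : IsTwistedCentroid c T) (hc : c ≠ 0) (hc' : c ≠ 1) (x y : L) :
    IsCentral ⁅T x, y⁆ := by
  intro z
  have h : c • ⁅z, ⁅T x, y⁆⁆ = ⁅z, ⁅T x, y⁆⁆ := by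
    rw [← hT.lie_apply_lie hc, leibniz_lie (T z) x y, ← hT.leibniz_apply hc]
  have h0 : (c - 1) • ⁅z, ⁅T x, y⁆⁆ = 0 := by rw [sub_smul, one_smul, h, sub_self]
  rw [← lie_skew, (smul_eq_zero_iff_right (sub_ne_zero.2 hc')).1 h0, neg_zero]

theorem apply_apply_lie (hT : IsTwistedCentroid c T) (hc : c ≠ 0) (x y : L) :
    T (T ⁅x, y⁆) = (c * c) • ⁅T x, T y⁆ := by
  rw [hT, map_smul, hT, ← hT.lie_apply hc (T x), smul_smul]

end IsTwistedCentroid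

theorem eq_zero_of_apply_self_eq_zero {R M : Type*} [CommRing R] [Preorder R] [AddCommGroup M]
    [Module R M] {B : LinearMap.BilinForm R M} (hpos : ∀ x, x ≠ 0 → 0 < B x x) (x : M)
    (hx : B x x = 0) : x = 0 :=
  of_not_not fun h ↦ (hpos x h).ne' hx

theorem apply_eq_zero_of_isSkewAdjoint {R M : Type*} [CommRing R] [AddCommGroup M] [Module R M]
    {B : LinearMap.BilinForm R M} {T : M →ₗ[R] M} (hB : ∀ x, B x x = 0 → x = 0)
    (hskew : B.IsSkewAdjoint T) {x : M} (hx : T (T x) = 0) : T x = 0 := by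
  apply hB
  rw [hskew x (T x), Pi.neg_apply, hx, neg_zero, map_zero]

theorem IsTwistedCentroid.forall_lie_apply_apply_eq_zero_iff {K L : Type*} [Field K] [LieRing L]
    [LieAlgebra K L] {B : LinearMap.BilinForm K L} {c : K} {T : L →ₗ[K] L}
    (hT : IsTwistedCentroid c T) (hc : c ≠ 0) (hB : ∀ x, B x x = 0 → x = 0)
    (hskew : B.IsSkewAdjoint T) :
    (∀ x y : L, ⁅T x, T y⁆ = 0) ↔ ∀ x y : L, ⁅T x, y⁆ = 0 := by
  refine ⟨fun h x y ↦ ?_, fun h x y ↦ h x (T y)⟩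
  have hTT : T (T ⁅x, y⁆) = 0 := by rw [hT.apply_apply_lie hc, h, smul_zero]
  have hlie : c • ⁅T x, y⁆ = 0 := by rw [← hT, apply_eq_zero_of_isSkewAdjoint hB hskew hTT]
  exact (smul_eq_zero_iff_right hc).1 hlie

theorem isCompl_orthogonal_of_anisotropic {K M : Type*} [Field K] [AddCommGroup M] [Module K M]
    [FiniteDimensional K M] {B : LinearMap.BilinForm K M} (hrefl : B.IsRefl)
    (hB : ∀ x, B x x = 0 → x = 0) (W : Submodule K M) : IsCompl W (B.orthogonal W) :=
  (LinearMap.BilinForm.isCompl_orthogonal_iff_disjoint hrefl).2 <|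
    Submodule.disjoint_def.2 fun x hx hx' ↦ hB x (hx' x hx)

theorem mem_center_iff_isCentral {R L : Type*} [CommRing R] [LieRing L] [LieAlgebra R L] {x : L} :
    x ∈ LieAlgebra.center R L ↔ IsCentral x :=
  forall_congr' fun y ↦ by rw [← lie_skew, neg_eq_zero]

section Real

variable {V : Type*} [LieRing V] [LieAlgebra ℝ V] {B : V →ₗ[ℝ] V →ₗ[ℝ] ℝ} {T : V →ₗ[ℝ] V}

theorem exists_isCentral_add_inVperp (hsymm : ∀ x y : V, B x y = B y x)
    (hcod : Codisjoint (LieAlgebra.center ℝ V).toSubmodule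
      (LinearMap.BilinForm.orthogonal B (LieAlgebra.center ℝ V).toSubmodule)) (x : V) :
    ∃ z v : V, IsCentral z ∧ InVperp B v ∧ z + v = x := by
  have hx : x ∈ (LieAlgebra.center ℝ V).toSubmodule ⊔ _ := hcod.eq_top ▸ Submodule.mem_top
  obtain ⟨z, hz, v, hv, hzv⟩ := Submodule.mem_sup.1 hx
  refine ⟨z, v, mem_center_iff_isCentral.1 hz, fun w hw ↦ ?_, hzv⟩
  rw [hsymm]
  exact hv w (mem_center_iff_isCentral.2 hw)

theorem IsKY.isSkewAdjoint (hT : IsKY B T) : LinearMap.IsSkewAdjoint B T := fun x y ↦ by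
  rw [Pi.neg_apply, map_neg, hT.1 x y]

theorem IsKY.isTwistedCentroid (hdec : ∀ x : V, ∃ z v, IsCentral z ∧ InVperp B v ∧ z + v = x)
    (hT : IsKY B T) : IsTwistedCentroid (3 : ℝ) T := by
  intro x y
  obtain ⟨z, v, hz, hv, rfl⟩ := hdec x
  obtain ⟨w, u, hw, hu, rfl⟩ := hdec y
  have hw' (a : V) : ⁅a, w⁆ = 0 := by rw [← lie_skew, hw, neg_zero]
  calc T ⁅z + v, w + u⁆ = T ⁅v, u⁆ := by rw [add_lie, hz, zero_add, lie_add, hw', zero_add]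
    _ = (3 : ℝ) • ⁅T v, u⁆ := hT.2.2 v u hv hu
    _ = (3 : ℝ) • ⁅T (z + v), w + u⁆ := by
      rw [map_add, add_lie, hT.2.1 z hz, zero_add, lie_add, hw', zero_add]

namespace IsLeviCivita

variable {nab : V → V → V} {c : ℝ}

theorem two_mul_apply_sub (hnab : IsLeviCivita B nab) (hskew : LinearMap.IsSkewAdjoint B T)
    (hT : IsTwistedCentroid c T) (hc : c ≠ 0) (x y w : V) :
    2 * B (nab x (T y) - T (nab x y)) w =
      (1 - c) * (B ⁅T x, y⁆ w + B ⁅T w, x⁆ y) - 2 * B ⁅T y, w⁆ x := by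
  have skew (a b : V) : B a (T b) = -B (T a) b := by
    rw [hskew a b, Pi.neg_apply, map_neg, neg_neg]
  have skew_lie (a b d : V) : B ⁅a, b⁆ (T d) = -(c * B ⁅T a, b⁆ d) := by
    rw [skew, hT, map_smul, LinearMap.smul_apply, smul_eq_mul]
  have koszul_left : 2 * B (nab x (T y)) w =
      B ⁅T x, y⁆ w - B ⁅T y, w⁆ x - c * B ⁅T w, x⁆ y := by
    rw [hnab, skew_lie, hT.lie_apply hc, sub_eq_add_neg _ (c * _)]
  have koszul_right : 2 * B (T (nab x y)) w =
      c * B ⁅T x, y⁆ w + B ⁅T y, w⁆ x - B ⁅T w, x⁆ y := by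
    have h := hnab x y (T w)
    rw [skew, skew_lie, hT.lie_apply hc] at h
    linarith
  rw [map_sub, LinearMap.sub_apply]
  linarith

theorem parallel_iff (hnab : IsLeviCivita B nab) (hB : ∀ x, B x x = 0 → x = 0)
    (hskew : LinearMap.IsSkewAdjoint B T) (hT : IsTwistedCentroid c T) (hc : c ≠ 0)
    (hc' : c ≠ 1) :
    (∀ x y : V, nab x (T y) = T (nab x y)) ↔ ∀ x y : V, ⁅T x, y⁆ = 0 := by
  have key := hnab.two_mul_apply_sub hskew hT hc
  refine ⟨fun h x y ↦ hB _ ?_, fun h x y ↦ sub_eq_zero.1 (hB _ ?_)⟩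
  · set w := ⁅T x, y⁆ with hw
    have hcentral : IsCentral w := hT.isCentral_lie hc hc' x y
    have hTw : ⁅T w, x⁆ = 0 := by rw [← hT.lie_apply hc, hcentral]
    have hTy : ⁅T y, w⁆ = 0 := by rw [← lie_skew, hcentral, neg_zero]
    have h0 : (1 - c) * B w w = 0 := by
      simpa [h, hTw, hTy, ← hw] using (key x y w).symm
    exact (mul_eq_zero_iff_left (sub_ne_zero.2 hc'.symm)).1 h0
  · simpa [h] using key x y (nab x (T y) - T (nab x y))

end IsLeviCivita

end Real

theorem statement_5_general (V : Type*) [LieRing V] [LieAlgebra ℝ V]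
    (B : V →ₗ[ℝ] V →ₗ[ℝ] ℝ)
    (hsymm : ∀ x y : V, B x y = B y x) (hpos : ∀ x : V, x ≠ 0 → 0 < B x x)
    (hcod : Codisjoint (LieAlgebra.center ℝ V).toSubmodule
      (LinearMap.BilinForm.orthogonal B (LieAlgebra.center ℝ V).toSubmodule))
    (nab : V → V → V) (hLC : IsLeviCivita B nab)
    (T : V →ₗ[ℝ] V) (hT : IsKY B T) :
    (∀ x y : V, nab x (T y) = T (nab x y)) ↔ (∀ x y : V, ⁅T x, T y⁆ = 0) := by
  have hB := eq_zero_of_apply_self_eq_zero hpos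
  have hskew := hT.isSkewAdjoint
  have hT3 : IsTwistedCentroid (3 : ℝ) T :=
    hT.isTwistedCentroid (exists_isCentral_add_inVperp hsymm hcod)
  rw [hLC.parallel_iff hB hskew hT3 (by norm_num) (by norm_num),
    hT3.forall_lie_apply_apply_eq_zero_iff (by norm_num) hB hskew]

/-- a KY tensor T on a 2-step nilpotent metric Lie algebra is parallel
iff range T is an abelian subalgebra, i.e. ⁅Tx, Ty⁆ = 0 for all x, y. -/
theorem statement_5 (V : Type*) [LieRing V] [LieAlgebra ℝ V] [FiniteDimensional ℝ V]
    (B : V →ₗ[ℝ] V →ₗ[ℝ] ℝ)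
    (hsymm : ∀ x y : V, B x y = B y x) (hpos : ∀ x : V, x ≠ 0 → 0 < B x x)
    (h2 : TwoStepNilpotent V)
    (nab : V → V → V) (hLC : IsLeviCivita B nab)
    (T : V →ₗ[ℝ] V) (hT : IsKY B T) :
    (∀ x y : V, nab x (T y) = T (nab x y)) ↔ (∀ x y : V, ⁅T x, T y⁆ = 0) := by
  exact statement_5_general V B hsymm hpos
    (isCompl_orthogonal_of_anisotropic (fun x y h ↦ hsymm y x ▸ h)
      (eq_zero_of_apply_self_eq_zero hpos) _).codisjoint nab hLC T hT
end

section
/- Let 𝔫 be a 2-step nilpotent finite-dimensional real Lie algebra with inner product ⟨·,·⟩ whose center 𝔷 equals the commutator ideal 𝔫' = ⁅𝔫,𝔫⁆, and let T be a Killing–Yano tensor on (𝔫,⟨·,·⟩) which is parallel with respect to the Levi-Civita product. Then T = 0. -/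
/-!
For central `c`, the vector `∇ₓ c` lies in `𝔳` and satisfies `2⟨∇ₓ c, y⟩ = ⟨⁅y, x⁆, c⟩`: up to a
constant, it is `j(c)x` for Kaplan's map `j : 𝔷 → 𝔰𝔬(𝔳)`. On `𝔳`, being parallel means `⁅x, Ty⁆ =
T⁅x, y⁆`, and comparing this with the factor `3` of the Killing–Yano condition gives `T⁅𝔳, 𝔳⁆ = 0`.
Hence `u = ∇ₓ(Tc) ∈ 𝔳` vanishes: for `x ∈ 𝔳` because `2|u|² = -⟨T⁅u, x⁆, c⟩ = 0`, and then for all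
`x` because `2|u|² = -2⟨∇ᵤ(Tc), x⟩ = 0`. So `Tc` is orthogonal to the commutator ideal, to which it
belongs, and `T` kills the center. Moreover `T(∇ₓ c) = ∇ₓ(Tc) = 0` says that `⁅Ty, x⁆ ⊥ c`; thus
`Ty` is central, so that `|Ty|² = -⟨y, T(Ty)⟩ = 0`.

The vectors `∇ₓ c` take the place of a decomposition of vectors along `𝔫 = 𝔳 ⊕ 𝔷`.
-/

/-- The endomorphism `T` is parallel with respect to the product `nab`, that is,
`∇ₓ(Ty) = T(∇ₓ y)`. -/
def IsParallel {V : Type*} (nab : V → V → V) (T : V → V) : Prop :=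
  ∀ x y : V, nab x (T y) = T (nab x y)

theorem IsCentral.lie_eq_zero {V : Type*} [LieRing V] {c : V} (hc : IsCentral c) (x : V) :
    ⁅x, c⁆ = 0 := by
  rw [← lie_skew, hc, neg_zero]

section

variable {V : Type*} [LieRing V] [LieAlgebra ℝ V] {B : V →ₗ[ℝ] V →ₗ[ℝ] ℝ} {nab : V → V → V}
  {T : V →ₗ[ℝ] V}

theorem IsKY.inVperp_map (hT : IsKY B T) {x : V} (hx : InVperp B x) : InVperp B (T x) := by
  intro c hc
  rw [hT.1, hx _ (hT.2.1 c hc), neg_zero]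

namespace IsLeviCivita

theorem two_mul_apply_of_inVperp (hLC : IsLeviCivita B nab) (hsymm : ∀ x y : V, B x y = B y x)
    (hlie : ∀ x y : V, IsCentral ⁅x, y⁆) {x y : V} (hx : InVperp B x) (hy : InVperp B y) (z : V) :
    2 * B (nab x y) z = B ⁅x, y⁆ z := by
  rw [hLC, hsymm ⁅y, z⁆, hsymm ⁅z, x⁆, hx _ (hlie y z), hy _ (hlie z x), sub_zero, add_zero]

theorem two_mul_apply_of_isCentral (hLC : IsLeviCivita B nab) {c : V} (hc : IsCentral c)
    (x y : V) : 2 * B (nab x c) y = B ⁅y, x⁆ c := by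
  rw [hLC, hc.lie_eq_zero, hc y, map_zero, LinearMap.zero_apply, LinearMap.zero_apply, sub_zero,
    zero_add]

theorem inVperp_of_isCentral (hLC : IsLeviCivita B nab) {c : V} (hc : IsCentral c) (x : V) :
    InVperp B (nab x c) := by
  intro d hd
  have h := hLC.two_mul_apply_of_isCentral hc x d
  rw [hd x, map_zero, LinearMap.zero_apply] at h
  linarith

end IsLeviCivita

namespace IsKY

theorem lie_map_of_inVperp (hT : IsKY B T) (hpar : IsParallel nab T) (hLC : IsLeviCivita B nab)
    (hsymm : ∀ x y : V, B x y = B y x) (hsep : B.SeparatingLeft)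
    (hlie : ∀ x y : V, IsCentral ⁅x, y⁆) {x y : V} (hx : InVperp B x) (hy : InVperp B y) :
    ⁅x, T y⁆ = T ⁅x, y⁆ := by
  refine sub_eq_zero.1 (hsep _ fun z => ?_)
  rw [map_sub, LinearMap.sub_apply, sub_eq_zero]
  calc B ⁅x, T y⁆ z
      = 2 * B (nab x (T y)) z :=
        (hLC.two_mul_apply_of_inVperp hsymm hlie hx (hT.inVperp_map hy) z).symm
    _ = -(2 * B (nab x y) (T z)) := by rw [hpar, hT.1, mul_neg]
    _ = -B ⁅x, y⁆ (T z) := by rw [hLC.two_mul_apply_of_inVperp hsymm hlie hx hy]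
    _ = B (T ⁅x, y⁆) z := (hT.1 _ _).symm

theorem map_lie_eq_zero_of_inVperp (hT : IsKY B T) (hpar : IsParallel nab T)
    (hLC : IsLeviCivita B nab) (hsymm : ∀ x y : V, B x y = B y x) (hsep : B.SeparatingLeft)
    (hlie : ∀ x y : V, IsCentral ⁅x, y⁆) {x y : V} (hx : InVperp B x) (hy : InVperp B y) :
    T ⁅x, y⁆ = 0 := by
  have lie_map : ⁅T x, y⁆ = T ⁅x, y⁆ := by
    rw [← lie_skew, hT.lie_map_of_inVperp hpar hLC hsymm hsep hlie hy hx, ← map_neg, lie_skew]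
  have three_smul : T ⁅x, y⁆ = (3 : ℝ) • T ⁅x, y⁆ :=
    (hT.2.2 x y hx hy).trans (by rw [lie_map])
  have sub_smul_eq_zero : (3 - 1 : ℝ) • T ⁅x, y⁆ = 0 := by
    rw [sub_smul, one_smul, ← three_smul, sub_self]
  exact (smul_eq_zero.1 sub_smul_eq_zero).resolve_left (by norm_num)

theorem nab_map_eq_zero_of_inVperp (hT : IsKY B T) (hpar : IsParallel nab T)
    (hLC : IsLeviCivita B nab) (hsymm : ∀ x y : V, B x y = B y x)
    (hdef : ∀ x : V, B x x = 0 → x = 0) (hlie : ∀ x y : V, IsCentral ⁅x, y⁆)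
    {c x : V} (hc : IsCentral c) (hx : InVperp B x) : nab x (T c) = 0 := by
  have hTc : IsCentral (T c) := hT.2.1 c hc
  set u := nab x (T c)
  have hu : InVperp B u := hLC.inVperp_of_isCentral hTc x
  have hTux : T ⁅u, x⁆ = 0 :=
    hT.map_lie_eq_zero_of_inVperp hpar hLC hsymm (fun v hv => hdef v (hv v)) hlie hu hx
  have norm_u : 2 * B u u = -B (T ⁅u, x⁆) c := by
    rw [hT.1, neg_neg, ← hLC.two_mul_apply_of_isCentral hTc]
  refine hdef u ?_
  rw [hTux, map_zero, LinearMap.zero_apply] at norm_u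
  linarith

theorem nab_map_eq_zero (hT : IsKY B T) (hpar : IsParallel nab T) (hLC : IsLeviCivita B nab)
    (hsymm : ∀ x y : V, B x y = B y x) (hdef : ∀ x : V, B x x = 0 → x = 0)
    (hlie : ∀ x y : V, IsCentral ⁅x, y⁆) {c : V} (hc : IsCentral c) (x : V) :
    nab x (T c) = 0 := by
  have hTc : IsCentral (T c) := hT.2.1 c hc
  set u := nab x (T c)
  have hu : InVperp B u := hLC.inVperp_of_isCentral hTc x
  have hnab : nab u (T c) = 0 := hT.nab_map_eq_zero_of_inVperp hpar hLC hsymm hdef hlie hc hu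
  have norm_u : 2 * B u u = -(2 * B (nab u (T c)) x) := by
    rw [hLC.two_mul_apply_of_isCentral hTc, hLC.two_mul_apply_of_isCentral hTc, ← lie_skew,
      map_neg, LinearMap.neg_apply]
  refine hdef u ?_
  rw [hnab, map_zero, LinearMap.zero_apply] at norm_u
  linarith

theorem map_eq_zero_of_isCentral (hT : IsKY B T) (hpar : IsParallel nab T)
    (hLC : IsLeviCivita B nab) (hsymm : ∀ x y : V, B x y = B y x)
    (hdef : ∀ x : V, B x x = 0 → x = 0) (hlie : ∀ x y : V, IsCentral ⁅x, y⁆)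
    (hspan : ∀ x : V, IsCentral x → x ∈ Submodule.span ℝ {u : V | ∃ a b : V, u = ⁅a, b⁆})
    {c : V} (hc : IsCentral c) : T c = 0 := by
  have hTc : IsCentral (T c) := hT.2.1 c hc
  have span_le : Submodule.span ℝ {u : V | ∃ a b : V, u = ⁅a, b⁆} ≤ LinearMap.ker (B (T c)) := by
    rw [Submodule.span_le]
    rintro _ ⟨y, x, rfl⟩
    rw [SetLike.mem_coe, LinearMap.mem_ker, hsymm, ← hLC.two_mul_apply_of_isCentral hTc,
      hT.nab_map_eq_zero hpar hLC hsymm hdef hlie hc, map_zero, LinearMap.zero_apply, mul_zero]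
  exact hdef _ (span_le (hspan _ hTc))

theorem isCentral_map (hT : IsKY B T) (hpar : IsParallel nab T) (hLC : IsLeviCivita B nab)
    (hsymm : ∀ x y : V, B x y = B y x) (hdef : ∀ x : V, B x x = 0 → x = 0)
    (hlie : ∀ x y : V, IsCentral ⁅x, y⁆) (y : V) : IsCentral (T y) := by
  intro x
  have map_nab {c : V} (hc : IsCentral c) : T (nab x c) = 0 := by
    rw [← hpar, hT.nab_map_eq_zero hpar hLC hsymm hdef hlie hc]
  refine hdef _ ?_
  set c := ⁅T y, x⁆
  have hc : IsCentral c := hlie (T y) x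
  calc B c c
      = 2 * B (nab x c) (T y) := (hLC.two_mul_apply_of_isCentral hc x (T y)).symm
    _ = -(2 * B (T (nab x c)) y) := by rw [hT.1, mul_neg, neg_neg]
    _ = 0 := by rw [map_nab hc, map_zero, LinearMap.zero_apply, mul_zero, neg_zero]

end IsKY

end

theorem statement_6_general {V : Type*} [LieRing V] [LieAlgebra ℝ V]
    {B : V →ₗ[ℝ] V →ₗ[ℝ] ℝ} (hsymm : ∀ x y : V, B x y = B y x)
    (hdef : ∀ x : V, B x x = 0 → x = 0)
    (hzc : ∀ x : V, IsCentral x ↔ x ∈ Submodule.span ℝ {u : V | ∃ a b : V, u = ⁅a, b⁆})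
    {nab : V → V → V} (hLC : IsLeviCivita B nab) {T : V →ₗ[ℝ] V} (hT : IsKY B T)
    (hpar : IsParallel nab T) : T = 0 := by
  have hlie (x y : V) : IsCentral ⁅x, y⁆ := (hzc _).2 (Submodule.subset_span ⟨x, y, rfl⟩)
  ext y
  have hTy : IsCentral (T y) := hT.isCentral_map hpar hLC hsymm hdef hlie y
  have hTTy : T (T y) = 0 :=
    hT.map_eq_zero_of_isCentral hpar hLC hsymm hdef hlie (fun x => (hzc x).1) hTy
  refine hdef (T y) ?_
  rw [hT.1, hTTy, map_zero, neg_zero]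

/-- if the center of a 2-step nilpotent metric Lie algebra equals its
commutator ideal, then any parallel KY tensor vanishes. -/
theorem statement_6 (V : Type*) [LieRing V] [LieAlgebra ℝ V] [FiniteDimensional ℝ V]
    (B : V →ₗ[ℝ] V →ₗ[ℝ] ℝ)
    (hsymm : ∀ x y : V, B x y = B y x) (hpos : ∀ x : V, x ≠ 0 → 0 < B x x)
    (h2 : TwoStepNilpotent V)
    (hzc : ∀ x : V, IsCentral x ↔ x ∈ Submodule.span ℝ {u : V | ∃ a b : V, u = ⁅a, b⁆})
    (nab : V → V → V) (hLC : IsLeviCivita B nab)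
    (T : V →ₗ[ℝ] V) (hT : IsKY B T)
    (hpar : ∀ x y : V, nab x (T y) = T (nab x y)) :
    T = 0 := by
  have hdef (x : V) (hx : B x x = 0) : x = 0 := not_imp_comm.1 (hpos x) hx.le.not_gt
  exact statement_6_general hsymm hdef hzc hLC hT hpar
end

section
/- Let 𝔫 be a 2-step nilpotent finite-dimensional real Lie algebra with inner product ⟨·,·⟩ and let T be an invertible Killing–Yano tensor on (𝔫,⟨·,·⟩). Let x, y, u, v ∈ 𝔳 = 𝔷^⊥ satisfy Tx = a·y, Ty = −a·x, Tu = b·v, Tv = −b·u with a > 0, b > 0, and suppose that at least one of the brackets ⁅x,u⁆, ⁅x,v⁆, ⁅y,u⁆, ⁅y,v⁆ is non-zero. Then a = b, all four of these brackets are non-zero, ⁅x,u⁆ = −⁅y,v⁆, and ⁅x,v⁆ = ⁅y,u⁆. -/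
/-!
Write the Killing–Yano identity as `T⁅p, q⁆ = c • ⁅T p, q⁆ = c • ⁅p, T q⁆` with `c = 3`.
Bracketing with a fixed vector carries a pair rotated by `T` at rate `a` to a pair rotated at rate
`c * a`. The brackets `⁅x, u⁆, ⁅y, u⁆, ⁅y, v⁆, ⁅x, v⁆` are therefore the consecutive corners of a
square with one pair of opposite sides rotated at rate `c * a` and the other at rate `c * b`. If one
corner is non-zero then all are, and `⁅x, u⁆` is an eigenvector of `T ∘ T` for both `-(c * a) ^ 2`
and `-(c * b) ^ 2`, so `a = b`. All sides then have the same rate, so the two neighbours of a corner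
agree up to sign, both being determined by its image under `T`.
-/

/-- The endomorphism `T` acts on the ordered pair `(x, y)` as `a` times the rotation through a
right angle, as on the pairs spanning the invariant planes of a skew-symmetric endomorphism.
The vectors may be zero or linearly dependent. -/
structure IsRotationPair {R M : Type*} [Ring R] [AddCommGroup M] [Module R M]
    (T : M →ₗ[R] M) (a : R) (x y : M) : Prop where
  map_fst : T x = a • y
  map_snd : T y = -(a • x)

namespace IsRotationPair

section Ring

variable {R M : Type*} [Ring R] [AddCommGroup M] [Module R M]
  {T : M →ₗ[R] M} {a b : R} {x y z : M}

theorem rotate (h : IsRotationPair T a x y) : IsRotationPair T a y (-x) where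
  map_fst := by rw [h.map_snd, smul_neg]
  map_snd := by rw [map_neg, h.map_fst]

theorem apply_apply_fst (h : IsRotationPair T a x y) : T (T x) = -(a ^ 2 • x) := by
  rw [h.map_fst, map_smul, h.map_snd, smul_neg, smul_smul, ← sq]

variable [IsDomain R] [Module.IsTorsionFree R M]

theorem snd_unique (hy : IsRotationPair T a x y) (hz : IsRotationPair T a x z) (ha : a ≠ 0) :
    y = z :=
  smul_right_injective M ha (hy.map_fst.symm.trans hz.map_fst)

theorem snd_ne_zero_iff (h : IsRotationPair T a x y) (ha : a ≠ 0) : y ≠ 0 ↔ x ≠ 0 := by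
  refine not_congr ⟨fun hy ↦ ?_, fun hx ↦ ?_⟩
  · simpa [hy, ha] using h.map_snd.symm
  · simpa [hx, ha] using h.map_fst.symm

theorem rate_sq_unique (hy : IsRotationPair T a x y) (hz : IsRotationPair T b x z) (hx : x ≠ 0) :
    a ^ 2 = b ^ 2 :=
  smul_left_injective R hx (neg_injective (hy.apply_apply_fst.symm.trans hz.apply_apply_fst))

end Ring

section CommRing

variable {R M N : Type*} [CommRing R] [AddCommGroup M] [Module R M] [AddCommGroup N] [Module R N]
  {S : M →ₗ[R] M} {T : N →ₗ[R] N} {a c : R} {x y : M}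

theorem map (h : IsRotationPair S a x y) (f : M →ₗ[R] N)
    (hx : T (f x) = c • f (S x)) (hy : T (f y) = c • f (S y)) :
    IsRotationPair T (c * a) (f x) (f y) where
  map_fst := by rw [hx, h.map_fst, map_smul, smul_smul]
  map_snd := by rw [hy, h.map_snd, map_neg, map_smul, smul_neg, smul_smul]

end CommRing

section LieAlgebra

variable {R L : Type*} [CommRing R] [LieRing L] [LieAlgebra R L] {T : L →ₗ[R] L} {a c : R}
  {x y u : L}

theorem lie_left (h : IsRotationPair T a x y)
    (hx : T ⁅u, x⁆ = c • ⁅u, T x⁆) (hy : T ⁅u, y⁆ = c • ⁅u, T y⁆) :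
    IsRotationPair T (c * a) ⁅u, x⁆ ⁅u, y⁆ :=
  h.map (LieAlgebra.ad R L u : L →ₗ[R] L) hx hy

theorem lie_right (h : IsRotationPair T a x y)
    (hx : T ⁅x, u⁆ = c • ⁅T x, u⁆) (hy : T ⁅y, u⁆ = c • ⁅T y, u⁆) :
    IsRotationPair T (c * a) ⁅x, u⁆ ⁅y, u⁆ :=
  h.map ((LieAlgebra.ad R L : L →ₗ[R] Module.End R L).flip u) hx hy

end LieAlgebra

end IsRotationPair

theorem map_lie_eq_smul_lie_right {R L : Type*} [CommRing R] [LieRing L] [LieAlgebra R L]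
    {T : L →ₗ[R] L} {c : R} {x y : L} (h : T ⁅y, x⁆ = c • ⁅T y, x⁆) :
    T ⁅x, y⁆ = c • ⁅x, T y⁆ := by
  rw [← lie_skew, map_neg, h, ← smul_neg, lie_skew]

theorem statement_11_general {R L : Type*} [CommRing R] [LinearOrder R] [IsStrictOrderedRing R]
    [LieRing L] [LieAlgebra R L] [Module.IsTorsionFree R L]
    {T : L →ₗ[R] L} {s : Set L} {c : R} (hc : c ≠ 0)
    (hT : ∀ p ∈ s, ∀ q ∈ s, T ⁅p, q⁆ = c • ⁅T p, q⁆)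
    {x y u v : L} (hx : x ∈ s) (hy : y ∈ s) (hu : u ∈ s) (hv : v ∈ s)
    {a b : R} (ha : 0 < a) (hb : 0 < b)
    (hxy : IsRotationPair T a x y) (huv : IsRotationPair T b u v)
    (hne : ⁅x, u⁆ ≠ 0 ∨ ⁅x, v⁆ ≠ 0 ∨ ⁅y, u⁆ ≠ 0 ∨ ⁅y, v⁆ ≠ 0) :
    a = b ∧ ⁅x, u⁆ ≠ 0 ∧ ⁅x, v⁆ ≠ 0 ∧ ⁅y, u⁆ ≠ 0 ∧ ⁅y, v⁆ ≠ 0 ∧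
      ⁅x, u⁆ = -⁅y, v⁆ ∧ ⁅x, v⁆ = ⁅y, u⁆ := by
  have hT' (p) (hp : p ∈ s) (q) (hq : q ∈ s) : T ⁅p, q⁆ = c • ⁅p, T q⁆ :=
    map_lie_eq_smul_lie_right (hT q hq p hp)
  have hca : c * a ≠ 0 := mul_ne_zero hc ha.ne'
  have hcb : c * b ≠ 0 := mul_ne_zero hc hb.ne'
  have hxy_u : IsRotationPair T (c * a) ⁅x, u⁆ ⁅y, u⁆ := hxy.lie_right (hT x hx u hu) (hT y hy u hu)
  have hx_uv : IsRotationPair T (c * b) ⁅x, u⁆ ⁅x, v⁆ :=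
    huv.lie_left (hT' x hx u hu) (hT' x hx v hv)
  have hy_uv : IsRotationPair T (c * b) ⁅y, u⁆ ⁅y, v⁆ :=
    huv.lie_left (hT' y hy u hu) (hT' y hy v hv)
  have hxv_iff : ⁅x, v⁆ ≠ 0 ↔ ⁅x, u⁆ ≠ 0 := hx_uv.snd_ne_zero_iff hcb
  have hyu_iff : ⁅y, u⁆ ≠ 0 ↔ ⁅x, u⁆ ≠ 0 := hxy_u.snd_ne_zero_iff hca
  have hyv_iff : ⁅y, v⁆ ≠ 0 ↔ ⁅x, u⁆ ≠ 0 := (hy_uv.snd_ne_zero_iff hcb).trans hyu_iff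
  have hxu : ⁅x, u⁆ ≠ 0 := by
    simpa only [hxv_iff, hyu_iff, hyv_iff, or_self] using hne
  have hab : a = b := by
    have hsq : (c * a) ^ 2 = (c * b) ^ 2 := hxy_u.rate_sq_unique hx_uv hxu
    rw [mul_pow, mul_pow, mul_right_inj' (pow_ne_zero 2 hc)] at hsq
    exact (sq_eq_sq₀ ha.le hb.le).mp hsq
  subst hab
  exact ⟨rfl, hxu, hxv_iff.mpr hxu, hyu_iff.mpr hxu, hyv_iff.mpr hxu,
    neg_eq_iff_eq_neg.mp (hxy_u.rotate.snd_unique hy_uv hca), hx_uv.snd_unique hxy_u hca⟩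

/-- for an invertible KY tensor and x,y,u,v ∈ 𝔳 with Tx = a·y, Ty = -a·x,
Tu = b·v, Tv = -b·u (a, b > 0), if one of the four cross brackets is non-zero then
a = b, all four brackets are non-zero, ⁅x,u⁆ = -⁅y,v⁆ and ⁅x,v⁆ = ⁅y,u⁆. -/
theorem statement_11 (V : Type*) [LieRing V] [LieAlgebra ℝ V] [FiniteDimensional ℝ V]
    (B : V →ₗ[ℝ] V →ₗ[ℝ] ℝ)
    (hsymm : ∀ x y : V, B x y = B y x) (hpos : ∀ x : V, x ≠ 0 → 0 < B x x)
    (h2 : TwoStepNilpotent V)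
    (T : V →ₗ[ℝ] V) (hT : IsKY B T) (hbij : Function.Bijective T)
    (x y u v : V) (hx : InVperp B x) (hy : InVperp B y)
    (hu : InVperp B u) (hv : InVperp B v)
    (a b : ℝ) (ha : 0 < a) (hb : 0 < b)
    (hTx : T x = a • y) (hTy : T y = -(a • x))
    (hTu : T u = b • v) (hTv : T v = -(b • u))
    (hne : ⁅x, u⁆ ≠ 0 ∨ ⁅x, v⁆ ≠ 0 ∨ ⁅y, u⁆ ≠ 0 ∨ ⁅y, v⁆ ≠ 0) :
    a = b ∧ ⁅x, u⁆ ≠ 0 ∧ ⁅x, v⁆ ≠ 0 ∧ ⁅y, u⁆ ≠ 0 ∧ ⁅y, v⁆ ≠ 0 ∧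
      ⁅x, u⁆ = -⁅y, v⁆ ∧ ⁅x, v⁆ = ⁅y, u⁆ := by
  exact statement_11_general (s := {w | InVperp B w}) three_ne_zero
    (fun p hp q hq ↦ hT.2.2 p q hp hq) hx hy hu hv ha hb ⟨hTx, hTy⟩ ⟨hTu, hTv⟩ hne
end
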